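/- arXiv:2111.02615 — 3 statements merged into one kernel-verified Lean document; each statement's English description precedes it below -/
import Mathlib

section
/- Let n ≥ 5 and let a, b : ZMod n be such that a, −a, b, −b are four pairwise distinct nonzero elements and the additive subgroup of ZMod n generated by {a, b} is all of ZMod n, and suppose that the automorphism group of Γ = Circ(n,{a,−a,b,−b}) does not act transitively on the edge set of Γ. If Γ has an Eulerian circuit with edge list (e_0, …, e_{2n−1}) for which there exists an automorphism σ of Γ with σ(e_i) = e_{(i+2) mod 2n} for all i, then the additive order of a + b equals n or the additive order of a − b equals n. -/
/-- The circulant graph `Circ(n, {a, -a, b, -b})` on `ZMod n`: distinct `i, j` are adjacent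
iff `j - i ∈ {a, -a, b, -b}`. -/
def circGraph (n : ℕ) (a b : ZMod n) : SimpleGraph (ZMod n) :=
  SimpleGraph.fromRel (fun i j => j - i = a ∨ j - i = b)

/-!
The edges `e₀, e₂, …` of the circuit form one orbit under `σ`, the edges `e₁, e₃, …` another, and
translations move any edge of jump `±a` (resp. `±b`) to any other. As the graph is not
edge-transitive, the two orbits are the two classes of edges of jump `±a` and `±b`, one being the
orbit of an edge `{x, y}` and the other the orbit of `{y, σ x}`.

If `x` and `y` lay in different orbits of vertices, the cyclic group generated by `σ` would contain
two distinct involutions; so `y = σᵏ x` for some `k`, and the sequence `g i = σⁱ x` takes all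
values. With `l = 1 - k`, the increments `g (i + k) - g i` are `±a` and the increments
`g (i + l) - g i` are `±b`. If one of these signs depended on `i`, then `2a = ±2b`, so that `2` or
`2k - 2l` would be a period of `g`, which is absurd as `k` or `l` is even. Hence `g (i + 1) - g i`
is one of `±a ± b`, independently of `i`, and this element generates the group.
-/

open Equiv Function SimpleGraph
open scoped fwdDiff

section ForwardDifference

variable {M G : Type*} [AddCommMonoid M] [AddCommGroup G] {f : M → G} {a b : G} {k l c : M}

lemma periodic_fwdDiff_comm : Periodic (Δ_[k] f) l ↔ Periodic (Δ_[l] f) k := by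
  refine forall_congr' fun i => ?_
  simp only [fwdDiff, add_right_comm i l k]
  grind

lemma periodic_fwdDiff_of_periodic (hf : Periodic f c) : Periodic (Δ_[k] f) c := fun i => by
  simp only [fwdDiff, add_right_comm i c k, hf _]

lemma periodic_fwdDiff_self (hstep : ∀ i, Δ_[k] f i = a ∨ Δ_[k] f i = -a)
    (hne : ∀ i, f (i + k + k) ≠ f i) : Periodic (Δ_[k] f) k := by
  intro i
  have hsum : Δ_[k] f (i + k) + Δ_[k] f i ≠ 0 := by
    simpa [fwdDiff, sub_eq_zero] using hne i
  rcases hstep i with h | h <;> rcases hstep (i + k) with h' | h' <;> simp_all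

lemma fwdDiff_add_eq (i : M) : Δ_[k + l] f i = Δ_[k] f i + Δ_[l] f (i + k) := by
  simp only [fwdDiff, add_assoc]
  abel

lemma two_zsmul_eq_sub_or_neg_sub {x y z : G} (hx : x = a ∨ x = -a) (hy : y = a ∨ y = -a)
    (hz : z = a ∨ z = -a) (hxy : x ≠ y) :
    (2 : ℤ) • z = x - y ∨ (2 : ℤ) • z = -(x - y) := by
  grind [two_zsmul]

lemma two_zsmul_fwdDiff_eq_or_eq_neg (hk : ∀ i, Δ_[k] f i = a ∨ Δ_[k] f i = -a)
    (hl : ∀ i, Δ_[l] f i = b ∨ Δ_[l] f i = -b) (h : ¬ Periodic (Δ_[k] f) l) (i j : M) :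
    (2 : ℤ) • Δ_[k] f i = (2 : ℤ) • Δ_[l] f j ∨ (2 : ℤ) • Δ_[k] f i = (-2 : ℤ) • Δ_[l] f j := by
  obtain ⟨m, hm⟩ := not_forall.1 h
  have hjump : Δ_[k] f (m + l) - Δ_[k] f m = Δ_[l] f (m + k) - Δ_[l] f m := by
    simp only [fwdDiff, add_right_comm m l k]
    abel
  have hm' : Δ_[l] f (m + k) ≠ Δ_[l] f m := by
    rwa [← sub_ne_zero, ← hjump, sub_ne_zero]
  have ha := two_zsmul_eq_sub_or_neg_sub (hk _) (hk _) (hk i) hm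
  have hb := two_zsmul_eq_sub_or_neg_sub (hl _) (hl _) (hl j) hm'
  rw [hjump] at ha
  grind

lemma apply_zsmul_of_periodic_fwdDiff {M : Type*} [AddCommGroup M] {f : M → G} {k : M}
    (hf : Periodic (Δ_[k] f) k) (n : ℤ) : f (n • k) = f 0 + n • Δ_[k] f 0 := by
  have hstep (n : ℤ) : f ((n + 1) • k) = f (n • k) + Δ_[k] f 0 := by
    rw [← hf.zsmul_eq n, fwdDiff, add_sub_cancel, add_one_zsmul]
  induction n with
  | zero => simp
  | succ n ih => rw [hstep, ih, add_assoc, add_one_zsmul]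
  | pred n ih =>
    rw [← add_left_inj (Δ_[k] f 0), ← hstep, sub_add_cancel, ih, add_assoc, ← add_one_zsmul,
      sub_add_cancel]

section Integer

variable {g : ℤ → G} {k l : ℤ}

lemma zmultiples_fwdDiff_eq_top (hg : Surjective g) (h : Periodic (Δ_[1] g) 1) :
    AddSubgroup.zmultiples (Δ_[1] g 0) = ⊤ := by
  refine (AddSubgroup.eq_top_iff' _).2 fun x => ?_
  obtain ⟨i, hi⟩ := hg (g 0 + x)
  refine ⟨i, add_left_cancel (a := g 0) ?_⟩
  rw [← hi, ← apply_zsmul_of_periodic_fwdDiff h, smul_eq_mul, mul_one]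

lemma periodic_two_or_of_not_periodic_fwdDiff (hkl : k + l = 1)
    (hg : ∀ i j, g i = g j → Periodic g (i - j))
    (hk : ∀ i, Δ_[k] g i = a ∨ Δ_[k] g i = -a) (hkk : Periodic (Δ_[k] g) k)
    (hl : ∀ i, Δ_[l] g i = b ∨ Δ_[l] g i = -b) (hll : Periodic (Δ_[l] g) l)
    (hkl' : ¬ Periodic (Δ_[k] g) l) : Periodic g (2 * k - 2 * l) ∨ Periodic g 2 := by
  have hcoincide (n : ℤ) (h : (2 : ℤ) • Δ_[k] g 0 = n • Δ_[l] g 0) :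
      Periodic g (2 * k - n * l) := by
    refine hg _ _ ?_
    simp only [← smul_eq_mul, apply_zsmul_of_periodic_fwdDiff hkk,
      apply_zsmul_of_periodic_fwdDiff hll, h]
  refine (two_zsmul_fwdDiff_eq_or_eq_neg hk hl hkl' 0 0).imp (hcoincide 2) fun h => ?_
  have hsum : 2 * k - -2 * l = 2 := by lia
  exact hsum ▸ hcoincide (-2) h

lemma periodic_fwdDiff_of_add_eq_one (hkl : k + l = 1)
    (hg : ∀ i j, g i = g j → Periodic g (i - j))
    (hk : ∀ i, Δ_[k] g i = a ∨ Δ_[k] g i = -a) (hkk : Periodic (Δ_[k] g) k)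
    (hl : ∀ i, Δ_[l] g i = b ∨ Δ_[l] g i = -b) (hll : Periodic (Δ_[l] g) l) :
    Periodic (Δ_[k] g) l := by
  by_contra hkl'
  have hper := periodic_two_or_of_not_periodic_fwdDiff hkl hg hk hkk hl hll hkl'
  have hk2 : Periodic (Δ_[k] g) 2 := by
    rcases hper with h | h
    · have hsum : 4 * k - (2 * k - 2 * l) = 2 := by lia
      exact hsum ▸ (hkk.int_mul 4).sub_period (periodic_fwdDiff_of_periodic h)
    · exact periodic_fwdDiff_of_periodic h
  have hl2 : Periodic (Δ_[l] g) 2 := by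
    rcases hper with h | h
    · have hsum : 4 * l + (2 * k - 2 * l) = 2 := by lia
      exact hsum ▸ (hll.int_mul 4).add_period (periodic_fwdDiff_of_periodic h)
    · exact periodic_fwdDiff_of_periodic h
  -- One of `k` and `l = 1 - k` is even.
  obtain ⟨m, hm | hm⟩ := k.even_or_odd'
  · have hlk : Periodic (Δ_[l] g) k := by
      rw [hm, mul_comm]
      exact hl2.int_mul m
    exact hkl' (periodic_fwdDiff_comm.1 hlk)
  · have hl_even : -m * 2 = l := by lia
    exact hkl' (hl_even ▸ hk2.int_mul (-m))

theorem zmultiples_add_eq_top_or_sub_of_fwdDiff (hsurj : Surjective g) (hkl : k + l = 1)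
    (hg : ∀ i j, g i = g j → Periodic g (i - j))
    (hk : ∀ i, Δ_[k] g i = a ∨ Δ_[k] g i = -a) (hkk : Periodic (Δ_[k] g) k)
    (hl : ∀ i, Δ_[l] g i = b ∨ Δ_[l] g i = -b) (hll : Periodic (Δ_[l] g) l) :
    AddSubgroup.zmultiples (a + b) = ⊤ ∨ AddSubgroup.zmultiples (a - b) = ⊤ := by
  have hkl' : Periodic (Δ_[k] g) l := periodic_fwdDiff_of_add_eq_one hkl hg hk hkk hl hll
  have hk1 : Periodic (Δ_[k] g) 1 := hkl ▸ hkk.add_period hkl'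
  have hl1 : Periodic (Δ_[l] g) 1 := hkl ▸ (periodic_fwdDiff_comm.1 hkl').add_period hll
  have hsum (i : ℤ) : Δ_[1] g i = Δ_[k] g i + Δ_[l] g (i + k) := hkl ▸ fwdDiff_add_eq i
  have h1 : Periodic (Δ_[1] g) 1 := fun i => by
    rw [hsum, hsum, hk1, add_right_comm, hl1]
  have htop := zmultiples_fwdDiff_eq_top hsurj h1
  rw [hsum] at htop
  rcases hk 0 with ha | ha <;> rcases hl (0 + k) with hb | hb <;> rw [ha, hb] at htop
  · exact Or.inl htop
  · exact Or.inr (sub_eq_add_neg a b ▸ htop)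
  · rw [← AddSubgroup.zmultiples_neg, neg_add, neg_neg, ← sub_eq_add_neg] at htop
    exact Or.inr htop
  · rw [← neg_add, AddSubgroup.zmultiples_neg] at htop
    exact Or.inl htop

end Integer

end ForwardDifference

section Permutation

lemma zpow_eq_zpow_of_sq_eq_one {H : Type*} [Group H] {x : H} {i j : ℤ} (hi : (x ^ i) ^ 2 = 1)
    (hi' : x ^ i ≠ 1) (hj : (x ^ j) ^ 2 = 1) (hj' : x ^ j ≠ 1) : x ^ i = x ^ j := by
  have hodd {m : ℤ} (hm : (x ^ m) ^ 2 = 1) (hm' : x ^ m ≠ 1) :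
      ∃ c : ℤ, 2 * m = orderOf x * (2 * c + 1) := by
    rw [← zpow_natCast, ← zpow_mul, ← orderOf_dvd_iff_zpow_eq_one] at hm
    obtain ⟨d, hd⟩ := hm
    obtain ⟨c, rfl | rfl⟩ := d.even_or_odd'
    · exact absurd (orderOf_dvd_iff_zpow_eq_one.1 ⟨c, by push_cast at hd; linarith⟩) hm'
    · exact ⟨c, by push_cast at hd; linarith⟩
  obtain ⟨c, hc⟩ := hodd hi hi'
  obtain ⟨d, hd⟩ := hodd hj hj'
  rw [← mul_inv_eq_one, ← zpow_sub, ← orderOf_dvd_iff_zpow_eq_one]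
  exact ⟨c - d, by linarith⟩

lemma periodic_zpow_of_apply_eq {V : Type*} {σ : Perm V} {x : V} {i j : ℤ}
    (hij : (σ ^ i) x = (σ ^ j) x) :
    Periodic (fun m : ℤ => (σ ^ m) x) (i - j) := fun m => by
  have hfix : (σ ^ (i - j)) x = x := by
    rw [sub_eq_neg_add, zpow_add, Perm.mul_apply, hij, ← Perm.mul_apply, ← zpow_add,
      neg_add_cancel, zpow_zero, Perm.one_apply]
  simp only [zpow_add, Perm.mul_apply, hfix]

/-- The unordered pairs `{σⁱ x, σⁱ y}`, `i ∈ ℤ`: the orbit of `{x, y}` under the cyclic group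
generated by `σ`. -/
def pairOrbit {V : Type*} (σ : Perm V) (x y : V) : Set (Sym2 V) :=
  Set.range fun i : ℤ => s((σ ^ i) x, (σ ^ i) y)

variable {G : Type*} [AddCommGroup G] {σ : Perm G} {x y z a b : G}

/-- The unordered pairs of elements of `G` differing by `a`, that is, the edges with jump `±a` of a
circulant graph on `G`. -/
def parallelClass (a : G) : Set (Sym2 G) :=
  Set.range fun x => s(x, x + a)

lemma mk_mem_parallelClass : s(x, y) ∈ parallelClass a ↔ y - x = a ∨ y - x = -a := by
  simp only [parallelClass, Set.mem_range, Sym2.eq_iff]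
  grind

lemma parallelClass_neg (a : G) : parallelClass (-a) = parallelClass a := by
  ext ⟨x, y⟩
  simp only [mk_mem_parallelClass, neg_neg, or_comm]

lemma zpow_sub_zpow_of_parallelClass_eq (h : parallelClass a = pairOrbit σ x y) (i : ℤ) :
    (σ ^ i) y - (σ ^ i) x = a ∨ (σ ^ i) y - (σ ^ i) x = -a := by
  rw [← mk_mem_parallelClass, h]
  exact ⟨i, rfl⟩

lemma exists_zpow_of_parallelClass_eq (h : parallelClass a = pairOrbit σ x y) (z : G) :
    ∃ i : ℤ, z = (σ ^ i) x ∧ z + a = (σ ^ i) y ∨ z = (σ ^ i) y ∧ z + a = (σ ^ i) x := by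
  have hz : s(z, z + a) ∈ pairOrbit σ x y := h ▸ Set.mem_range_self z
  obtain ⟨i, hi⟩ := hz
  exact ⟨i, Sym2.eq_iff.1 hi.symm⟩

lemma zpow_apply_ne_of_parallelClass_eq (ha : a ≠ -a) (h : parallelClass a = pairOrbit σ x y)
    {k : ℤ} (hk : (σ ^ k) x = y) : (σ ^ k) y ≠ x := by
  intro hswap
  have hneighbour {c : G} (hc : parallelClass c = pairOrbit σ x y) : x + c = y := by
    obtain ⟨i, ⟨hx, hy⟩ | ⟨hx, hy⟩⟩ := exists_zpow_of_parallelClass_eq hc x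
    · rw [hy, ← hk, Perm.zpow_apply_comm, ← hx]
    · rw [hy, ← hswap, Perm.zpow_apply_comm, ← hx, hk]
  exact ha (add_left_cancel ((hneighbour h).trans
    (hneighbour (c := -a) (parallelClass_neg a ▸ h)).symm))

lemma zpow_eq_one_of_parallelClass_eq (h : parallelClass a = pairOrbit σ x y) {i : ℤ}
    (hx : (σ ^ i) x = x) (hy : (σ ^ i) y = y) : σ ^ i = 1 := by
  ext z
  obtain ⟨j, ⟨hz, -⟩ | ⟨hz, -⟩⟩ := exists_zpow_of_parallelClass_eq h z <;>
    rw [hz, Perm.zpow_apply_comm] <;> simp only [hx, hy, Perm.one_apply]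

/- The edges `{x, x + a}` and `{x, x - a}` lie in one orbit; since the orbits of `x` and `y` are
disjoint, the power of `σ` moving one to the other fixes `x`, hence swaps `x + a` and `x - a`. -/
lemma exists_involution_of_not_sameCycle (ha : a ≠ -a) (h : parallelClass a = pairOrbit σ x y)
    (hxy : ¬ σ.SameCycle x y) :
    ∃ i : ℤ, (σ ^ i) x = x ∧ (σ ^ i) y ≠ y ∧ (σ ^ i) ^ 2 = 1 := by
  wlog hy : y = x + a generalizing a
  · refine this (a := -a) (by rwa [neg_neg, ne_comm]) (by rwa [parallelClass_neg]) ?_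
    rcases zpow_sub_zpow_of_parallelClass_eq h 0 with h0 | h0
    · exact absurd (by rw [← h0]; simp) hy
    · rw [← h0]; simp
  have h_neg : parallelClass (-a) = pairOrbit σ x y := by rwa [parallelClass_neg]
  obtain ⟨i, ⟨hx, hxa⟩ | ⟨hx, -⟩⟩ := exists_zpow_of_parallelClass_eq h_neg x
  swap
  · exact absurd (Perm.SameCycle.symm ⟨i, hx.symm⟩) hxy
  have hiy : (σ ^ i) y ≠ y := by
    rw [← hxa, hy]
    exact fun h' => ha (add_left_cancel h').symm
  have hsq_x : (σ ^ (i * 2)) x = x := by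
    rw [mul_two, zpow_add, Perm.mul_apply, ← hx, ← hx]
  have hsq_ne : (σ ^ (i * 2)) y ≠ (σ ^ i) y := by
    rw [mul_two, zpow_add, Perm.mul_apply]
    exact fun h' => hiy ((σ ^ i).injective h')
  have hsq_y : (σ ^ (i * 2)) y = y := by
    rcases zpow_sub_zpow_of_parallelClass_eq h (i * 2) with h' | h' <;>
      rw [hsq_x, sub_eq_iff_eq_add'] at h'
    · rw [h', hy]
    · exact absurd (h'.trans hxa) hsq_ne
  exact ⟨i, hx.symm, hiy, zpow_mul σ i 2 ▸ zpow_eq_one_of_parallelClass_eq h hsq_x hsq_y⟩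

/- Otherwise the cyclic group generated by `σ` contains an involution fixing `x` but not `y`, and
one fixing `y`; a cyclic group has at most one involution. -/
lemma sameCycle_of_parallelClass_eq (ha : a ≠ -a) (hb : b ≠ -b)
    (hA : parallelClass a = pairOrbit σ x y) (hB : parallelClass b = pairOrbit σ y (σ x)) :
    σ.SameCycle x y := by
  by_contra hxy
  have hyx : ¬ σ.SameCycle y (σ x) := by rwa [Perm.sameCycle_apply_right, Perm.sameCycle_comm]
  obtain ⟨i, -, hiy, hi⟩ := exists_involution_of_not_sameCycle ha hA hxy
  obtain ⟨j, hjy, hjx, hj⟩ := exists_involution_of_not_sameCycle hb hB hyx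
  have hi1 : σ ^ i ≠ 1 := fun h => hiy (by rw [h, Perm.one_apply])
  have hj1 : σ ^ j ≠ 1 := fun h => hjx (by rw [h, Perm.one_apply])
  exact hiy (by rw [zpow_eq_zpow_of_sq_eq_one hi hi1 hj hj1, hjy])

lemma exists_zpow_apply_eq (h : parallelClass a = pairOrbit σ x y) (hxy : σ.SameCycle x y)
    (z : G) : ∃ i : ℤ, (σ ^ i) x = z := by
  obtain ⟨i, ⟨hz, -⟩ | ⟨hz, -⟩⟩ := exists_zpow_of_parallelClass_eq h z
  · exact ⟨i, hz.symm⟩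
  · obtain ⟨k, hk⟩ := hxy
    exact ⟨i + k, by rw [zpow_add, Perm.mul_apply, hk, hz]⟩

lemma fwdDiff_zpow_apply {k : ℤ} (h : parallelClass a = pairOrbit σ x y) (hk : (σ ^ k) x = y)
    (hz : σ.SameCycle x z) (i : ℤ) :
    Δ_[k] (fun i : ℤ => (σ ^ i) z) i = a ∨ Δ_[k] (fun i : ℤ => (σ ^ i) z) i = -a := by
  obtain ⟨m, rfl⟩ := hz
  have := zpow_sub_zpow_of_parallelClass_eq h (i + m)
  simpa only [fwdDiff, ← hk, ← Perm.mul_apply, ← zpow_add, add_right_comm, add_assoc,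
    add_comm k m] using this

lemma periodic_fwdDiff_zpow_apply {k : ℤ} (ha : a ≠ -a)
    (h : parallelClass a = pairOrbit σ x y) (hk : (σ ^ k) x = y) (hz : σ.SameCycle x z) :
    Periodic (Δ_[k] (fun i : ℤ => (σ ^ i) z)) k := by
  refine periodic_fwdDiff_self (fwdDiff_zpow_apply h hk hz) fun i hi => ?_
  obtain ⟨m, rfl⟩ := hz
  refine zpow_apply_ne_of_parallelClass_eq ha h hk ((σ ^ (i + m)).injective ?_)
  rw [← hk]
  simp only [← Perm.mul_apply, ← zpow_add] at hi ⊢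
  convert hi using 3
  abel

theorem zmultiples_eq_top_of_parallelClass_eq (ha : a ≠ -a) (hb : b ≠ -b)
    (hA : parallelClass a = pairOrbit σ x y) (hB : parallelClass b = pairOrbit σ y (σ x)) :
    AddSubgroup.zmultiples (a + b) = ⊤ ∨ AddSubgroup.zmultiples (a - b) = ⊤ := by
  have hxy := sameCycle_of_parallelClass_eq ha hb hA hB
  obtain ⟨k, hk⟩ := id hxy
  have hl : (σ ^ (1 - k)) y = σ x := by
    rw [← hk, ← Perm.mul_apply, ← zpow_add, sub_add_cancel, zpow_one]
  exact zmultiples_add_eq_top_or_sub_of_fwdDiff (g := fun i : ℤ => (σ ^ i) x)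
    (exists_zpow_apply_eq hA hxy) (add_sub_cancel k 1) (fun _ _ => periodic_zpow_of_apply_eq)
    (fwdDiff_zpow_apply hA hk (Perm.SameCycle.refl σ x))
    (periodic_fwdDiff_zpow_apply ha hA hk (Perm.SameCycle.refl σ x))
    (fwdDiff_zpow_apply hB hl hxy.symm) (periodic_fwdDiff_zpow_apply hb hB hl hxy.symm)

end Permutation

section EquivalenceRelation

variable {α : Type*} {r : α → α → Prop} {A B C D : Set α}

lemma not_rel_of_not_forall_union (hr : Equivalence r) (hA : ∀ e ∈ A, ∀ e' ∈ A, r e e')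
    (hB : ∀ e ∈ B, ∀ e' ∈ B, r e e') (h : ¬ ∀ e ∈ A ∪ B, ∀ e' ∈ A ∪ B, r e e') :
    ∀ e ∈ A, ∀ e' ∈ B, ¬ r e e' := by
  intro d hd d' hd' hdd'
  have hAB : ∀ e ∈ A, ∀ e' ∈ B, r e e' := fun e he e' he' =>
    hr.trans (hA e he d hd) (hr.trans hdd' (hB d' hd' e' he'))
  refine h ?_
  rintro e (he | he) e' (he' | he')
  · exact hA e he e' he'
  · exact hAB e he e' he'
  · exact hr.symm (hAB e' he' e he)
  · exact hB e he e' he'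

lemma eq_sep_union_of_not_rel (hA : ∀ e ∈ A, ∀ e' ∈ A, r e e')
    (hAB : ∀ e ∈ A, ∀ e' ∈ B, ¬ r e e') {d : α} (hd : d ∈ A) : A = {e ∈ A ∪ B | r d e} := by
  ext e
  refine ⟨fun he => ⟨Or.inl he, hA d hd e he⟩, ?_⟩
  rintro ⟨he | he, hde⟩
  · exact he
  · exact absurd hde (hAB d hd e he)

lemma eq_and_eq_or_of_union_eq_union (hr : Equivalence r) (hA : ∀ e ∈ A, ∀ e' ∈ A, r e e')
    (hB : ∀ e ∈ B, ∀ e' ∈ B, r e e') (hC : ∀ e ∈ C, ∀ e' ∈ C, r e e')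
    (hD : ∀ e ∈ D, ∀ e' ∈ D, r e e') (hU : A ∪ B = C ∪ D)
    (h : ¬ ∀ e ∈ A ∪ B, ∀ e' ∈ A ∪ B, r e e') : A = C ∧ B = D ∨ A = D ∧ B = C := by
  have hAB := not_rel_of_not_forall_union hr hA hB h
  have hBA := not_rel_of_not_forall_union hr hB hA (Set.union_comm A B ▸ h)
  have hCD := not_rel_of_not_forall_union hr hC hD (hU ▸ h)
  have hDC := not_rel_of_not_forall_union hr hD hC (Set.union_comm C D ▸ hU ▸ h)
  obtain ⟨a, ha⟩ : A.Nonempty := by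
    by_contra! hA'
    exact h (by simpa [hA'] using hB)
  obtain ⟨b, hb⟩ : B.Nonempty := by
    by_contra! hB'
    exact h (by simpa [hB'] using hA)
  have haA := eq_sep_union_of_not_rel hA hAB ha
  have hbB := eq_sep_union_of_not_rel hB hBA hb
  have haU : a ∈ C ∪ D := hU ▸ Or.inl ha
  have hbU : b ∈ C ∪ D := hU ▸ Or.inr hb
  rw [Set.union_comm, hU] at hbB
  rw [hU] at haA
  rcases haU with haC | haD <;> rcases hbU with hbC | hbD
  · exact absurd (hC a haC b hbC) (hAB a ha b hb)
  · exact Or.inl ⟨haA.trans (eq_sep_union_of_not_rel hC hCD haC).symm,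
      hbB.trans (Set.union_comm C D ▸ (eq_sep_union_of_not_rel hD hDC hbD).symm)⟩
  · exact Or.inr ⟨haA.trans (Set.union_comm C D ▸ (eq_sep_union_of_not_rel hD hDC haD).symm),
      hbB.trans (eq_sep_union_of_not_rel hC hCD hbC).symm⟩
  · exact absurd (hD a haD b hbD) (hAB a ha b hb)

end EquivalenceRelation

section Graph

variable {V : Type*} {Γ : SimpleGraph V}

/-- Two unordered pairs of vertices are equivalent if an automorphism of `Γ` maps one to the
other. -/
def EdgeEquiv (Γ : SimpleGraph V) (e e' : Sym2 V) : Prop :=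
  ∃ τ : Γ ≃g Γ, Sym2.map ⇑τ e = e'

/-- A graph is edge-transitive if its automorphism group acts transitively on its edges. -/
def EdgeTransitive (Γ : SimpleGraph V) : Prop :=
  ∀ e ∈ Γ.edgeSet, ∀ e' ∈ Γ.edgeSet, EdgeEquiv Γ e e'

lemma equivalence_edgeEquiv : Equivalence (EdgeEquiv Γ) where
  refl e := ⟨1, congrFun Sym2.map_id e⟩
  symm := by
    rintro e _ ⟨τ, rfl⟩
    exact ⟨τ.symm, by simp [Sym2.map_map]⟩
  trans := by
    rintro e _ _ ⟨τ, rfl⟩ ⟨ρ, rfl⟩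
    exact ⟨ρ * τ, by rw [Sym2.map_map, RelIso.coe_mul]⟩

lemma toEquiv_zpow (σ : Γ ≃g Γ) (i : ℤ) : (σ ^ i).toEquiv = σ.toEquiv ^ i :=
  map_zpow (MonoidHom.mk' (RelIso.toEquiv : (Γ ≃g Γ) → Perm V) fun _ _ => rfl) σ i

lemma edgeEquiv_of_mem_pairOrbit {σ : Γ ≃g Γ} {x y : V} {e : Sym2 V}
    (he : e ∈ pairOrbit σ.toEquiv x y) : EdgeEquiv Γ s(x, y) e := by
  obtain ⟨i, rfl⟩ := he
  refine ⟨σ ^ i, ?_⟩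
  simp only [← toEquiv_zpow]
  rfl

lemma edgeEquiv_of_mem_pairOrbit_of_mem_pairOrbit {σ : Γ ≃g Γ} {x y : V} :
    ∀ e ∈ pairOrbit σ.toEquiv x y, ∀ e' ∈ pairOrbit σ.toEquiv x y, EdgeEquiv Γ e e' :=
  fun _ he _ he' => equivalence_edgeEquiv.trans
    (equivalence_edgeEquiv.symm (edgeEquiv_of_mem_pairOrbit he)) (edgeEquiv_of_mem_pairOrbit he')

lemma pairOrbit_subset_edgeSet (σ : Γ ≃g Γ) {x y : V} (h : Γ.Adj x y) :
    pairOrbit σ.toEquiv x y ⊆ Γ.edgeSet := by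
  intro e he
  obtain ⟨τ, rfl⟩ := edgeEquiv_of_mem_pairOrbit he
  exact (Iso.map_mem_edgeSet_iff τ).2 h

variable {σ : Γ ≃g Γ} {u : ℕ → V}

lemma mem_pairOrbit_of_map_eq (hσ : ∀ i, Sym2.map σ s(u i, u (i + 1)) = s(u (i + 2), u (i + 3)))
    (j i : ℕ) : s(u (2 * i + j), u (2 * i + j + 1)) ∈ pairOrbit σ.toEquiv (u j) (u (j + 1)) := by
  induction i with
  | zero => exact ⟨0, by simp⟩
  | succ i ih =>
    obtain ⟨m, hm⟩ := ih
    have hindex : 2 * (i + 1) + j = 2 * i + j + 2 := by lia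
    refine ⟨1 + m, ?_⟩
    rw [hindex]
    refine Eq.trans ?_ (hσ (2 * i + j))
    rw [← hm]
    simp only [zpow_add, zpow_one, Perm.mul_apply]
    rfl

lemma edgeSet_eq_pairOrbit_union (hσ : ∀ i, Sym2.map σ s(u i, u (i + 1)) = s(u (i + 2), u (i + 3)))
    (hu : ∀ i, Γ.Adj (u i) (u (i + 1))) (hcover : ∀ e ∈ Γ.edgeSet, ∃ i, s(u i, u (i + 1)) = e) :
    Γ.edgeSet = pairOrbit σ.toEquiv (u 0) (u 1) ∪ pairOrbit σ.toEquiv (u 1) (u 2) := by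
  refine Set.Subset.antisymm (fun e he => ?_) (Set.union_subset
    (pairOrbit_subset_edgeSet σ (hu 0)) (pairOrbit_subset_edgeSet σ (hu 1)))
  obtain ⟨i, rfl⟩ := hcover e he
  obtain ⟨m, rfl | rfl⟩ := i.even_or_odd'
  · exact Or.inl (mem_pairOrbit_of_map_eq hσ 0 m)
  · exact Or.inr (mem_pairOrbit_of_map_eq hσ 1 m)

/- If `σ` reversed the orientation of the walk, then `σ (u 1) = u 2`, so the edges of index 2 and 3
would coincide and the two orbits of edges would be one. -/
lemma apply_zero_eq_of_not_edgeTransitive (h : ¬ EdgeTransitive Γ)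
    (hσ : ∀ i, Sym2.map σ s(u i, u (i + 1)) = s(u (i + 2), u (i + 3)))
    (hu : ∀ i, Γ.Adj (u i) (u (i + 1))) (hcover : ∀ e ∈ Γ.edgeSet, ∃ i, s(u i, u (i + 1)) = e) :
    σ (u 0) = u 2 := by
  have h01 : ¬ EdgeEquiv Γ s(u 0, u 1) s(u 1, u 2) := by
    rw [EdgeTransitive, edgeSet_eq_pairOrbit_union hσ hu hcover] at h
    exact not_rel_of_not_forall_union equivalence_edgeEquiv
      edgeEquiv_of_mem_pairOrbit_of_mem_pairOrbit edgeEquiv_of_mem_pairOrbit_of_mem_pairOrbit h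
      _ ⟨0, rfl⟩ _ ⟨0, rfl⟩
  have h23 : s(u 2, u 3) ≠ s(u 3, u 4) := by
    intro heq
    rw [← hσ 0, ← hσ 1] at heq
    exact h01 ((Sym2.map.injective σ.injective heq) ▸ equivalence_edgeEquiv.refl _)
  have hσ0 := hσ 0
  have hσ1 := hσ 1
  simp only [Sym2.map_mk, Sym2.eq_iff, zero_add, Nat.reduceAdd] at hσ0 hσ1 h23
  have hne := (hu 2).ne
  grind

lemma exists_edgeSet_eq_pairOrbit_union (h : ¬ EdgeTransitive Γ)
    (hσ : ∀ i, Sym2.map σ s(u i, u (i + 1)) = s(u (i + 2), u (i + 3)))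
    (hu : ∀ i, Γ.Adj (u i) (u (i + 1))) (hcover : ∀ e ∈ Γ.edgeSet, ∃ i, s(u i, u (i + 1)) = e) :
    ∃ x y, Γ.edgeSet = pairOrbit σ.toEquiv x y ∪ pairOrbit σ.toEquiv y (σ x) :=
  ⟨u 0, u 1, apply_zero_eq_of_not_edgeTransitive h hσ hu hcover ▸
    edgeSet_eq_pairOrbit_union hσ hu hcover⟩

lemma exists_get_edges_eq {v : V} (p : Γ.Walk v v) :
    ∃ u : ℕ → V, ∀ i (h : 0 < p.edges.length),
      p.edges.get ⟨i % p.edges.length, Nat.mod_lt i h⟩ = s(u i, u (i + 1)) := by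
  refine ⟨fun i => p.getVert (i % p.edges.length), fun i h => ?_⟩
  have hlast : p.getVert (i % p.edges.length + 1) = p.getVert ((i + 1) % p.edges.length) := by
    rcases eq_or_lt_of_le (Nat.succ_le_of_lt (Nat.mod_lt i h)) with hi | hi
    · rw [Nat.succ_eq_add_one] at hi
      rw [← Nat.mod_add_mod, hi, Nat.mod_self, Walk.getVert_zero, Walk.length_edges,
        Walk.getVert_length]
    · rw [← Nat.mod_add_mod, Nat.mod_eq_of_lt hi]
  rw [List.get_eq_getElem, Walk.getElem_edges, hlast]

lemma exists_edgeSet_eq_of_walk (h : ¬ EdgeTransitive Γ) {v : V} (p : Γ.Walk v v)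
    (hp : ∀ e ∈ Γ.edgeSet, e ∈ p.edges)
    (hσ : ∀ i : Fin p.edges.length, Sym2.map σ (p.edges.get i) =
      p.edges.get ⟨((i : ℕ) + 2) % p.edges.length, Nat.mod_lt _ i.pos⟩) :
    ∃ x y, Γ.edgeSet = pairOrbit σ.toEquiv x y ∪ pairOrbit σ.toEquiv y (σ x) := by
  obtain ⟨e, he⟩ : Γ.edgeSet.Nonempty := by
    by_contra! hempty
    exact h (by simp [EdgeTransitive, hempty])
  have hlen : 0 < p.edges.length := List.length_pos_of_mem (hp e he)
  obtain ⟨u, hu⟩ := exists_get_edges_eq p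
  refine exists_edgeSet_eq_pairOrbit_union (u := u) h (fun i => ?_) (fun i => ?_) fun e he => ?_
  · rw [← hu i hlen, hσ, ← hu (i + 2) hlen]
    simp only [Nat.mod_add_mod]
  · rw [← mem_edgeSet, ← hu i hlen]
    exact p.edges_subset_edgeSet (List.get_mem _ _)
  · obtain ⟨i, rfl⟩ := List.mem_iff_get.1 (hp e he)
    refine ⟨i, ?_⟩
    rw [← hu i hlen]
    simp only [Nat.mod_eq_of_lt i.isLt]

end Graph

section Circulant

variable {G : Type*} [AddCommGroup G] {a b : G}

/-- Translation by `c` as an automorphism of a circulant graph. -/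
def translation (s : Set G) (c : G) : circulantGraph s ≃g circulantGraph s where
  toEquiv := Equiv.addRight c
  map_rel_iff' := circulantGraph_adj_translate

lemma edgeEquiv_of_mem_parallelClass (s : Set G) :
    ∀ e ∈ parallelClass a, ∀ e' ∈ parallelClass a, EdgeEquiv (circulantGraph s) e e' := by
  rintro _ ⟨x, rfl⟩ _ ⟨y, rfl⟩
  refine ⟨translation s (y - x), ?_⟩
  have htrans (z : G) : translation s (y - x) z = z + (y - x) := rfl
  simp only [Sym2.map_mk, htrans, add_sub_cancel, add_right_comm x a]

lemma edgeSet_circulantGraph_pair (ha : a ≠ 0) (hb : b ≠ 0) :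
    (circulantGraph {a, b}).edgeSet = parallelClass a ∪ parallelClass b := by
  ext ⟨x, y⟩
  simp only [mem_edgeSet, circulantGraph_adj, Set.mem_union, mk_mem_parallelClass,
    Set.mem_insert_iff, Set.mem_singleton_iff]
  grind

theorem stmt7_general {Γ : SimpleGraph G} (hΓ : Γ = circulantGraph {a, b}) (ha : a ≠ -a)
    (hb : b ≠ -b) (hnotet : ¬ EdgeTransitive Γ) {v : G} (p : Γ.Walk v v)
    (hp : ∀ e ∈ Γ.edgeSet, e ∈ p.edges) (σ : Γ ≃g Γ)
    (hσ : ∀ i : Fin p.edges.length, Sym2.map σ (p.edges.get i) =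
      p.edges.get ⟨((i : ℕ) + 2) % p.edges.length, Nat.mod_lt _ i.pos⟩) :
    AddSubgroup.zmultiples (a + b) = ⊤ ∨ AddSubgroup.zmultiples (a - b) = ⊤ := by
  obtain ⟨x, y, horbits⟩ := exists_edgeSet_eq_of_walk hnotet p hp hσ
  have hclasses : Γ.edgeSet = parallelClass a ∪ parallelClass b := by
    rw [hΓ, edgeSet_circulantGraph_pair] <;> rintro rfl <;> simp at ha hb
  have hparallel (c : G) : ∀ e ∈ parallelClass c, ∀ e' ∈ parallelClass c, EdgeEquiv Γ e e' :=
    hΓ ▸ edgeEquiv_of_mem_parallelClass {a, b}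
  rw [EdgeTransitive, hclasses] at hnotet
  rcases eq_and_eq_or_of_union_eq_union equivalence_edgeEquiv (hparallel a) (hparallel b)
    edgeEquiv_of_mem_pairOrbit_of_mem_pairOrbit edgeEquiv_of_mem_pairOrbit_of_mem_pairOrbit
    (hclasses.symm.trans horbits) hnotet with ⟨hA, hB⟩ | ⟨hA, hB⟩
  · exact zmultiples_eq_top_of_parallelClass_eq ha hb hA hB
  · rw [add_comm a b, ← neg_sub b a, AddSubgroup.zmultiples_neg]
    exact zmultiples_eq_top_of_parallelClass_eq hb ha hB hA

end Circulant

lemma circGraph_eq_circulantGraph (n : ℕ) (a b : ZMod n) :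
    circGraph n a b = circulantGraph {a, b} := by
  ext x y
  simp only [circGraph, circulantGraph_adj, fromRel_adj, Set.mem_insert_iff,
    Set.mem_singleton_iff, or_comm]

lemma addOrderOf_eq_of_zmultiples_eq_top {n : ℕ} {c : ZMod n}
    (hc : AddSubgroup.zmultiples c = ⊤) : addOrderOf c = n := by
  rw [← Nat.card_zmultiples, hc, AddSubgroup.card_top, Nat.card_zmod]

theorem stmt7 (n : ℕ) (hn : 5 ≤ n) (a b : ZMod n)
    (ha : a ≠ 0) (hb : b ≠ 0) (hdist : ([a, -a, b, -b] : List (ZMod n)).Nodup)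
    (hgen : AddSubgroup.closure {a, b} = (⊤ : AddSubgroup (ZMod n)))
    (hnotet : ¬ (∀ e ∈ (circGraph n a b).edgeSet, ∀ e' ∈ (circGraph n a b).edgeSet,
      ∃ τ : circGraph n a b ≃g circGraph n a b, Sym2.map ⇑τ e = e'))
    (v : ZMod n) (p : (circGraph n a b).Walk v v) (hp : p.IsEulerian)
    (σ : circGraph n a b ≃g circGraph n a b)
    (hσ : ∀ i : Fin p.edges.length,
      Sym2.map ⇑σ (p.edges.get i) =
        p.edges.get ⟨((i : ℕ) + 2) % p.edges.length, Nat.mod_lt _ i.pos⟩) :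
    addOrderOf (a + b) = n ∨ addOrderOf (a - b) = n := by
  have ha' : a ≠ -a := fun h => by simp [← h] at hdist
  have hb' : b ≠ -b := fun h => by simp [← h] at hdist
  exact (stmt7_general (circGraph_eq_circulantGraph n a b) ha' hb' hnotet p
    (fun _ => hp.mem_edges_iff.2) σ hσ).imp addOrderOf_eq_of_zmultiples_eq_top
    addOrderOf_eq_of_zmultiples_eq_top
end

section
/- Let r ≥ 2 and s, t ≥ 1 with s·t > 1 and Nat.gcd s t = 1, and set ℓ = 2·r·s·t. Then Γ = C_{2r}[sK_1,tK_1] has an Eulerian circuit with edge list (e_0, …, e_{ℓ−1}) such that there exist automorphisms σ and ρ of Γ with σ(e_i) = e_{(i+2) mod ℓ} for all i and ρ(e_i) = e_{(ℓ−1−i) mod ℓ} for all i; moreover, for every Eulerian circuit of Γ with edge list (f_0, …, f_{ℓ−1}) there is no automorphism σ' of Γ with σ'(f_i) = f_{(i+1) mod ℓ} for all i. -/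
/-- The graph `C_{2r}[sK_1, tK_1]`: vertex set `(ZMod r × ZMod s) ⊕ (ZMod r × ZMod t)`,
with `inl (k, i)` adjacent to `inr (k', j)` iff `k' = k` or `k' = k - 1`. -/
def blowupCycle (r s t : ℕ) : SimpleGraph ((ZMod r × ZMod s) ⊕ (ZMod r × ZMod t)) :=
  SimpleGraph.fromRel (fun v w => ∃ (k : ZMod r) (i : ZMod s) (k' : ZMod r) (j : ZMod t),
    v = Sum.inl (k, i) ∧ w = Sum.inr (k', j) ∧ (k' = k ∨ k' = k - 1))

/-!
Along an identification of `ZMod r × ZMod s` with `ZMod (r * s)` that turns the first coordinate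
into the residue mod `r`, and likewise for `t`, consider the bi-infinite walk
`…, inl m, inr m, inl (m + 1), inr (m + 1), …`. Its edges are the pairs `(m, m)` and `(m + 1, m)`
in `ZMod (r * s) × ZMod (r * t)`, so by the Chinese remainder theorem it runs through every edge
exactly once per period `2 * lcm (r * s) (r * t) = 2 * r * s * t`. Moving the walk two steps
forward and reversing it are induced by automorphisms of the graph.

An automorphism shifting the edges of a circuit by one maps the vertex common to two consecutive
edges to the next vertex, hence to a neighbour. Here neighbours have degrees `2 * s` and `2 * t`, so
this forces `s = t`, and then `s = t = 1` by coprimality.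
-/

section EulerianLine

variable {V W : Type*} {G : SimpleGraph V} {H : SimpleGraph W} {f : ℤ → V} {ℓ : ℕ}

/-- The edge traversed by a bi-infinite walk `f` between the times `n` and `n + 1`. -/
def lineEdge (f : ℤ → V) (n : ℤ) : Sym2 V := s(f n, f (n + 1))

/-- A closed Eulerian walk of length `ℓ`, unrolled to an `ℓ`-periodic bi-infinite walk `f`, so that
shifts and reflections of the walk become translations and reflections of `ℤ`. -/
structure IsEulerianLine (G : SimpleGraph V) (f : ℤ → V) (ℓ : ℕ) : Prop where
  adj (n : ℤ) : G.Adj (f n) (f (n + 1))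
  periodic : Function.Periodic f ℓ
  dvd_of_lineEdge_eq {m n : ℤ} : lineEdge f m = lineEdge f n → (ℓ : ℤ) ∣ n - m
  exists_lineEdge_eq {e : Sym2 V} : e ∈ G.edgeSet → ∃ n, lineEdge f n = e

theorem map_lineEdge_of_translation {σ : V → V} {k : ℤ} (hσ : ∀ n, σ (f n) = f (n + k)) (n : ℤ) :
    (lineEdge f n).map σ = lineEdge f (n + k) := by
  simp only [lineEdge, Sym2.map_mk, hσ, add_right_comm]

theorem map_lineEdge_of_reflection {ρ : V → V} (hρ : ∀ n, ρ (f n) = f (-n)) (n : ℤ) :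
    (lineEdge f n).map ρ = lineEdge f (-1 - n) := by
  simp only [lineEdge, Sym2.map_mk, hρ]
  rw [Sym2.eq_swap]
  ring_nf

theorem exists_walk_edges_eq_map_lineEdge (hadj : ∀ n, G.Adj (f n) (f (n + 1))) (n : ℕ) :
    ∃ p : G.Walk (f 0) (f n), p.edges = (List.range n).map fun i : ℕ ↦ lineEdge f i := by
  induction n with
  | zero => exact ⟨.nil, rfl⟩
  | succ n ih =>
    obtain ⟨p, hp⟩ := ih
    refine ⟨(p.concat (hadj n)).copy rfl (by push_cast; rfl), ?_⟩
    simp [hp, List.range_succ, lineEdge]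

namespace IsEulerianLine

theorem comp_iso (hf : IsEulerianLine G f ℓ) (φ : G ≃g H) : IsEulerianLine H (φ ∘ f) ℓ := by
  have lineEdge_comp (n : ℤ) : lineEdge (φ ∘ f) n = (lineEdge f n).map φ := rfl
  refine ⟨fun n ↦ φ.map_adj_iff.2 (hf.adj n), hf.periodic.comp φ, fun {m n} h ↦ ?_, fun {e} he ↦ ?_⟩
  · rw [lineEdge_comp, lineEdge_comp] at h
    exact hf.dvd_of_lineEdge_eq (Sym2.map.injective φ.injective h)
  · obtain ⟨e', rfl⟩ := φ.mapEdgeSet.surjective ⟨e, he⟩ |>.imp fun _ ↦ congrArg Subtype.val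
    obtain ⟨n, hn⟩ := hf.exists_lineEdge_eq e'.2
    exact ⟨n, by rw [lineEdge_comp, hn]; rfl⟩

theorem periodic_lineEdge (hf : IsEulerianLine G f ℓ) : Function.Periodic (lineEdge f) ℓ := by
  intro n
  rw [lineEdge, lineEdge, add_right_comm, hf.periodic, hf.periodic]

theorem lineEdge_natCast_mod (hf : IsEulerianLine G f ℓ) (n : ℕ) :
    lineEdge f (n % ℓ : ℕ) = lineEdge f n :=
  Function.Periodic.map_mod_nat (f := fun n : ℕ ↦ lineEdge f n)
    (fun n ↦ by simpa using hf.periodic_lineEdge n) n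

theorem nodup_map_lineEdge (hf : IsEulerianLine G f ℓ) :
    ((List.range ℓ).map fun i : ℕ ↦ lineEdge f i).Nodup := by
  refine List.nodup_range.map_on fun i hi j hj hij ↦ ?_
  rw [List.mem_range] at hi hj
  have := Int.eq_zero_of_abs_lt_dvd (hf.dvd_of_lineEdge_eq hij) (by rw [abs_lt]; omega)
  omega

theorem mem_map_lineEdge (hf : IsEulerianLine G f ℓ) (hℓ : ℓ ≠ 0) {e : Sym2 V}
    (he : e ∈ G.edgeSet) : e ∈ (List.range ℓ).map fun i : ℕ ↦ lineEdge f i := by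
  obtain ⟨n, rfl⟩ := hf.exists_lineEdge_eq he
  have hpos : (0 : ℤ) < ℓ := by positivity
  lift n % ℓ to ℕ using Int.emod_nonneg n hpos.ne' with i hi
  refine List.mem_map.2 ⟨i, List.mem_range.2 ?_, ?_⟩
  · have := Int.emod_lt_of_pos n hpos
    omega
  · rw [hi, Int.emod_def, mul_comm]
    exact hf.periodic_lineEdge.sub_int_mul_eq _

theorem exists_isEulerian [DecidableEq V] (hf : IsEulerianLine G f ℓ) (hℓ : ℓ ≠ 0) :
    ∃ p : G.Walk (f 0) (f 0), p.IsEulerian ∧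
      p.edges = (List.range ℓ).map fun i : ℕ ↦ lineEdge f i := by
  obtain ⟨p, hp⟩ := exists_walk_edges_eq_map_lineEdge hf.adj ℓ
  have hp' : (p.copy rfl hf.periodic.eq).edges = _ := (p.edges_copy _ _).trans hp
  refine ⟨_, SimpleGraph.Walk.IsTrail.isEulerian_of_forall_mem ⟨?_⟩ fun e he ↦ ?_, hp'⟩
  · exact hp' ▸ hf.nodup_map_lineEdge
  · exact hp' ▸ hf.mem_map_lineEdge hℓ he

theorem exists_symmetric_isEulerian [DecidableEq V] (hf : IsEulerianLine G f ℓ) (hℓ : ℓ ≠ 0)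
    {σ ρ : V → V} {k : ℕ} (hσ : ∀ n, σ (f n) = f (n + k)) (hρ : ∀ n, ρ (f n) = f (-n)) :
    ∃ p : G.Walk (f 0) (f 0), p.IsEulerian ∧
      (∀ i : Fin p.edges.length, Sym2.map σ (p.edges.get i) =
        p.edges.get ⟨((i : ℕ) + k) % p.edges.length, Nat.mod_lt _ i.pos⟩) ∧
      (∀ i : Fin p.edges.length, Sym2.map ρ (p.edges.get i) =
        p.edges.get ⟨(p.edges.length - 1 - (i : ℕ)) % p.edges.length, Nat.mod_lt _ i.pos⟩) := by
  obtain ⟨p, hp, hedges⟩ := hf.exists_isEulerian hℓ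
  have hlen : p.edges.length = ℓ := by simp [hedges]
  have hget (i : Fin p.edges.length) : p.edges.get i = lineEdge f i := by simp [hedges]
  have hget_mod (n : ℕ) (h : n % p.edges.length < p.edges.length) :
      p.edges.get ⟨n % p.edges.length, h⟩ = lineEdge f n :=
    (hget _).trans (by rw [← hf.lineEdge_natCast_mod n, ← hlen])
  refine ⟨p, hp, fun i ↦ ?_, fun i ↦ ?_⟩
  · rw [hget, hget_mod, map_lineEdge_of_translation hσ, Nat.cast_add]
  · have hcast : ((p.edges.length - 1 - i : ℕ) : ℤ) = -1 - i + ℓ := by omega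
    rw [hget, hget_mod, map_lineEdge_of_reflection hρ, hcast, hf.periodic_lineEdge]

end IsEulerianLine

end EulerianLine

section ShiftByOne

variable {V : Type*} {G : SimpleGraph V}

theorem isCircuit_of_isEulerian [DecidableEq V] {v : V} {q : G.Walk v v} (hq : q.IsEulerian)
    {e : Sym2 V} (he : e ∈ G.edgeSet) : q.IsCircuit := by
  refine ⟨hq.isTrail, fun hnil ↦ ?_⟩
  have hmem := hq.mem_edges_iff.2 he
  rw [hnil, SimpleGraph.Walk.edges_nil] at hmem
  exact List.not_mem_nil hmem

theorem exists_adj_apply_of_shift_one {v : V} {q : G.Walk v v} (hq : q.IsCircuit) {σ : V → V}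
    (hσ : ∀ i : Fin q.edges.length, Sym2.map σ (q.edges.get i) =
      q.edges.get ⟨((i : ℕ) + 1) % q.edges.length, Nat.mod_lt _ i.pos⟩) :
    ∃ u, G.Adj u (σ u) := by
  have hlen : 3 ≤ q.edges.length := q.length_edges ▸ hq.three_le_length
  have h₀ := hσ ⟨0, by omega⟩
  have h₁ := hσ ⟨1, by omega⟩
  have hne : q.edges[1] ≠ q.edges[2] := fun h ↦ by
    simpa using hq.edges_nodup.getElem_inj_iff.1 h
  simp only [List.get_eq_getElem, Nat.mod_eq_of_lt (show 0 + 1 < q.edges.length by omega),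
    Nat.mod_eq_of_lt (show 1 + 1 < q.edges.length by omega), SimpleGraph.Walk.getElem_edges,
    Sym2.map_mk, zero_add, Nat.reduceAdd] at h₀ h₁ hne
  have hmem₁ : σ (q.getVert 1) ∈ s(q.getVert 1, q.getVert 2) := h₀ ▸ Sym2.mem_mk_right _ _
  have hmem₂ : σ (q.getVert 1) ∈ s(q.getVert 2, q.getVert 3) := h₁ ▸ Sym2.mem_mk_left _ _
  have hσ₁ : σ (q.getVert 1) = q.getVert 2 := by
    by_contra hσ₂
    have h := (Sym2.mem_iff.1 hmem₁).resolve_right hσ₂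
    have h' := (Sym2.mem_iff.1 hmem₂).resolve_left hσ₂
    exact hne (by rw [← h, h', Sym2.eq_swap])
  exact ⟨q.getVert 1, hσ₁ ▸ q.adj_getVert_succ (by rw [← q.length_edges]; omega)⟩

theorem ncard_neighborSet_apply_iso {W : Type*} {H : SimpleGraph W} (φ : G ≃g H) (v : V) :
    (H.neighborSet (φ v)).ncard = (G.neighborSet v).ncard :=
  (Nat.card_congr (φ.mapNeighborSet v)).symm

end ShiftByOne

section RelGraph

variable {A B A' B' : Type*} {R : A → B → Prop} {R' : A' → B' → Prop}

/-- The bipartite graph of a relation: `inl a` is adjacent to `inr b` iff `R a b`. -/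
def relGraph (R : A → B → Prop) : SimpleGraph (A ⊕ B) where
  Adj
  | .inl a, .inr b | .inr b, .inl a => R a b
  | _, _ => False
  symm.symm
  | .inl _, .inr _, h | .inr _, .inl _, h => h

namespace relGraph

@[simp]
theorem adj_inl_inr {a : A} {b : B} : (relGraph R).Adj (.inl a) (.inr b) ↔ R a b := .rfl

@[simp] theorem adj_inr_inl {a : A} {b : B} : (relGraph R).Adj (.inr b) (.inl a) ↔ R a b := .rfl

@[simp] theorem not_adj_inl_inl {a a' : A} : ¬ (relGraph R).Adj (.inl a) (.inl a') := id

@[simp] theorem not_adj_inr_inr {b b' : B} : ¬ (relGraph R).Adj (.inr b) (.inr b') := id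

/-- The isomorphism of bipartite graphs induced by an isomorphism of relations. -/
def iso (e₁ : A ≃ A') (e₂ : B ≃ B') (h : ∀ a b, R' (e₁ a) (e₂ b) ↔ R a b) :
    relGraph R ≃g relGraph R' where
  toEquiv := e₁.sumCongr e₂
  map_rel_iff' := by rintro (a | b) (a' | b') <;> simp [h]

theorem neighborSet_inl (a : A) : (relGraph R).neighborSet (.inl a) = .inr '' {b | R a b} := by
  ext (a' | b) <;> simp

theorem neighborSet_inr (b : B) : (relGraph R).neighborSet (.inr b) = .inl '' {a | R a b} := by
  ext (a | b') <;> simp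

theorem eq_of_adj_of_ncard_neighborSet_eq {m n : ℕ} (hm : ∀ a, {b | R a b}.ncard = m)
    (hn : ∀ b, {a | R a b}.ncard = n) {v w : A ⊕ B} (hvw : (relGraph R).Adj v w)
    (hcard : ((relGraph R).neighborSet v).ncard = ((relGraph R).neighborSet w).ncard) : m = n := by
  have hinl (a : A) : ((relGraph R).neighborSet (.inl a)).ncard = m := by
    rw [neighborSet_inl, Set.ncard_image_of_injective _ Sum.inr_injective, hm]
  have hinr (b : B) : ((relGraph R).neighborSet (.inr b)).ncard = n := by
    rw [neighborSet_inr, Set.ncard_image_of_injective _ Sum.inl_injective, hn]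
  rcases v with a | b <;> rcases w with a' | b'
  · exact (not_adj_inl_inl hvw).elim
  · rwa [hinl, hinr] at hcard
  · rw [hinl, hinr] at hcard
    exact hcard.symm
  · exact (not_adj_inr_inr hvw).elim

theorem forall_mem_edgeSet {P : Sym2 (A ⊕ B) → Prop}
    (h : ∀ a b, R a b → P s(.inl a, .inr b)) : ∀ e ∈ (relGraph R).edgeSet, P e := by
  refine Sym2.ind ?_
  rintro (a | b) (a' | b') hab
  · exact False.elim hab
  · exact h a b' hab
  · exact Sym2.eq_swap ▸ h a' b hab
  · exact False.elim hab

end relGraph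

end RelGraph

section Arithmetic

theorem gcd_mul_mul_of_coprime (r : ℕ) {s t : ℕ} (h : s.Coprime t) :
    (r * s).gcd (r * t) = r := by
  rw [Nat.gcd_mul_left, h.gcd_eq_one, mul_one]

theorem lcm_mul_mul_of_coprime (r : ℕ) {s t : ℕ} (h : s.Coprime t) :
    (r * s).lcm (r * t) = r * s * t := by
  rw [Nat.lcm_mul_left, h.lcm_eq_mul, mul_assoc]

theorem exists_intCast_eq_and_intCast_eq {a b : ℕ} {m n : ℤ}
    (h : (m : ZMod (a.gcd b)) = n) : ∃ k : ℤ, (k : ZMod a) = m ∧ (k : ZMod b) = n := by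
  simp only [ZMod.intCast_eq_intCast_iff_dvd_sub] at h ⊢
  obtain ⟨c, hc⟩ := h
  rw [Nat.gcd_eq_gcd_ab] at hc
  exact ⟨m + a * (a.gcdA b * c), ⟨-(a.gcdA b * c), by ring⟩,
    ⟨a.gcdB b * c, by linear_combination hc⟩⟩

theorem intCast_eq_and_intCast_eq_iff {a b : ℕ} {m n : ℤ} :
    ((m : ZMod a) = n ∧ (m : ZMod b) = n) ↔ ((a.lcm b : ℕ) : ℤ) ∣ n - m := by
  simp only [ZMod.intCast_eq_intCast_iff_dvd_sub]
  exact (Int.coe_lcm_dvd_iff).symm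

theorem exists_equiv_prod_of_surjective {A B C : Type*} [AddGroup A] [AddGroup B] {φ : A →+ B}
    (hφ : Function.Surjective φ) (k : φ.ker ≃ C) : ∃ e : A ≃ B × C, ∀ a, (e a).1 = φ a :=
  ⟨(Equiv.sigmaFiberEquiv φ).symm.trans <|
    (Equiv.sigmaCongrRight fun b ↦ (AddMonoidHom.fiberEquivKerOfSurjective hφ b).trans k).trans <|
      Equiv.sigmaEquivProd B C, fun _ ↦ rfl⟩

/-- Reduction mod `r`, which plays the role of the first coordinate on `ZMod (r * s)`. -/
abbrev residue (r s : ℕ) : ZMod (r * s) →+* ZMod r := ZMod.castHom (dvd_mul_right r s) (ZMod r)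

theorem exists_zmod_mul_equiv_prod {r s : ℕ} (hr : r ≠ 0) (hs : s ≠ 0) :
    ∃ e : ZMod (r * s) ≃ ZMod r × ZMod s, ∀ x, (e x).1 = residue r s x := by
  have hsurj : Function.Surjective (residue r s).toAddMonoidHom :=
    ZMod.castHom_surjective (dvd_mul_right r s)
  have hcard : Nat.card (residue r s).toAddMonoidHom.ker = Nat.card (ZMod s) := by
    have h := (residue r s).toAddMonoidHom.ker.card_mul_index
    rw [AddSubgroup.index_ker, AddMonoidHom.range_eq_top.2 hsurj, AddSubgroup.card_top,
      Nat.card_zmod, Nat.card_zmod, mul_comm] at h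
    rw [Nat.card_zmod]
    exact Nat.eq_of_mul_eq_mul_left (Nat.pos_of_ne_zero hr) h
  have : NeZero (r * s) := ⟨mul_ne_zero hr hs⟩
  have : NeZero s := ⟨hs⟩
  obtain ⟨k⟩ := Finite.card_eq.1 hcard
  exact exists_equiv_prod_of_surjective hsurj k

end Arithmetic

section BlowupCycle

variable {r s t : ℕ}

/-- Incidence in the cycle `C_{2r}`, whose vertices of either parity are numbered by `ZMod r`. -/
def CycleRel (k k' : ZMod r) : Prop := k' = k ∨ k' = k - 1

theorem blowupCycle_eq_relGraph (r s t : ℕ) :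
    blowupCycle r s t = relGraph fun x y ↦ CycleRel x.1 y.1 := by
  ext (⟨k, i⟩ | ⟨k, j⟩) (⟨k', i'⟩ | ⟨k', j'⟩) <;> simp [blowupCycle, CycleRel]

theorem ncard_setOf_cycleRel_left (hr : 2 ≤ r) (k : ZMod r) :
    {y : ZMod r × ZMod t | CycleRel k y.1}.ncard = 2 * t := by
  have : Fact (1 < r) := ⟨hr⟩
  have hprod : {y : ZMod r × ZMod t | CycleRel k y.1} = {k, k - 1} ×ˢ Set.univ := by
    ext; simp [CycleRel]
  have hne : k ≠ k - 1 := fun h ↦ one_ne_zero (sub_eq_self.1 h.symm)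
  rw [hprod, Set.ncard_prod, Set.ncard_pair hne, Set.ncard_univ, Nat.card_zmod]

theorem ncard_setOf_cycleRel_right (hr : 2 ≤ r) (k : ZMod r) :
    {x : ZMod r × ZMod s | CycleRel x.1 k}.ncard = 2 * s := by
  have : Fact (1 < r) := ⟨hr⟩
  have hprod : {x : ZMod r × ZMod s | CycleRel x.1 k} = {k, k + 1} ×ˢ Set.univ := by
    ext; simp [CycleRel, eq_comm, eq_sub_iff_add_eq]
  have hne : k ≠ k + 1 := by simp
  rw [hprod, Set.ncard_prod, Set.ncard_pair hne, Set.ncard_univ, Nat.card_zmod]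

theorem eq_of_adj_apply_iso (hr : 2 ≤ r) (σ : blowupCycle r s t ≃g blowupCycle r s t)
    {v : (ZMod r × ZMod s) ⊕ (ZMod r × ZMod t)} (h : (blowupCycle r s t).Adj v (σ v)) : s = t := by
  have hcard := (ncard_neighborSet_apply_iso σ v).symm
  generalize σ v = w at h hcard
  rw [blowupCycle_eq_relGraph] at h hcard
  have := relGraph.eq_of_adj_of_ncard_neighborSet_eq
    (fun x : ZMod r × ZMod s ↦ ncard_setOf_cycleRel_left (t := t) hr x.1)
    (fun y : ZMod r × ZMod t ↦ ncard_setOf_cycleRel_right hr y.1) h hcard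
  omega

end BlowupCycle

section ResidueGraph

variable {r s t : ℕ}

/-- The graph `C_{2r}[sK_1, tK_1]` with its vertices numbered cyclically on either side; a vertex
lies over its residue mod `r`. -/
def residueGraph (r s t : ℕ) : SimpleGraph (ZMod (r * s) ⊕ ZMod (r * t)) :=
  relGraph fun x y ↦ CycleRel (residue r s x) (residue r t y)

theorem nonempty_residueGraph_iso_blowupCycle (hr : r ≠ 0) (hs : s ≠ 0) (ht : t ≠ 0) :
    Nonempty (residueGraph r s t ≃g blowupCycle r s t) := by
  obtain ⟨e₁, he₁⟩ := exists_zmod_mul_equiv_prod hr hs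
  obtain ⟨e₂, he₂⟩ := exists_zmod_mul_equiv_prod hr ht
  rw [blowupCycle_eq_relGraph]
  exact ⟨relGraph.iso e₁ e₂ fun x y ↦ by rw [he₁, he₂]⟩

/-- The automorphism `x ↦ x + 1` on both sides. -/
def residueGraphTranslation (r s t : ℕ) : residueGraph r s t ≃g residueGraph r s t :=
  relGraph.iso (Equiv.addRight 1) (Equiv.addRight 1) fun x y ↦ by
    simp only [CycleRel, Equiv.coe_addRight, map_add, map_one, add_sub_right_comm, add_left_inj]

theorem residueGraphTranslation_inl (x : ZMod (r * s)) :
    residueGraphTranslation r s t (.inl x) = .inl (x + 1) := rfl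

theorem residueGraphTranslation_inr (y : ZMod (r * t)) :
    residueGraphTranslation r s t (.inr y) = .inr (y + 1) := rfl

/-- The automorphism `x ↦ -x` on the left and `y ↦ -1 - y` on the right. -/
def residueGraphReflection (r s t : ℕ) : residueGraph r s t ≃g residueGraph r s t :=
  relGraph.iso (Equiv.neg _) (Equiv.subLeft (-1)) fun x y ↦ by
    simp only [CycleRel, Equiv.neg_apply, Equiv.subLeft_apply, map_sub, map_neg, map_one]
    grind

theorem residueGraphReflection_inl (x : ZMod (r * s)) :
    residueGraphReflection r s t (.inl x) = .inl (-x) := rfl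

theorem residueGraphReflection_inr (y : ZMod (r * t)) :
    residueGraphReflection r s t (.inr y) = .inr (-1 - y) := rfl

/-- The bi-infinite walk `…, inl m, inr m, inl (m + 1), inr (m + 1), …`, with `inl m` at
time `2 * m`. -/
def residueLine (r s t : ℕ) (n : ℤ) : ZMod (r * s) ⊕ ZMod (r * t) :=
  if Even n then .inl (n / 2 : ℤ) else .inr (n / 2 : ℤ)

theorem residueLine_two_mul (m : ℤ) : residueLine r s t (2 * m) = .inl (m : ZMod (r * s)) := by
  simp [residueLine]

theorem residueLine_two_mul_add_one (m : ℤ) :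
    residueLine r s t (2 * m + 1) = .inr (m : ZMod (r * t)) := by
  have hdiv : (2 * m + 1) / 2 = m := by omega
  simp [residueLine, hdiv]

theorem residueLine_two_mul_add_two (m : ℤ) :
    residueLine r s t (2 * m + 1 + 1) = .inl ((m + 1 : ℤ) : ZMod (r * s)) := by
  rw [← residueLine_two_mul]
  ring_nf

theorem residueGraphTranslation_residueLine (n : ℤ) :
    residueGraphTranslation r s t (residueLine r s t n) = residueLine r s t (n + 2) := by
  obtain ⟨m, rfl | rfl⟩ := n.even_or_odd'
  · rw [show 2 * m + 2 = 2 * (m + 1) by ring, residueLine_two_mul, residueLine_two_mul]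
    simp [residueGraphTranslation_inl]
  · rw [show 2 * m + 1 + 2 = 2 * (m + 1) + 1 by ring, residueLine_two_mul_add_one,
      residueLine_two_mul_add_one]
    simp [residueGraphTranslation_inr]

theorem residueGraphReflection_residueLine (n : ℤ) :
    residueGraphReflection r s t (residueLine r s t n) = residueLine r s t (-n) := by
  obtain ⟨m, rfl | rfl⟩ := n.even_or_odd'
  · rw [show -(2 * m) = 2 * -m by ring, residueLine_two_mul, residueLine_two_mul]
    simp [residueGraphReflection_inl]
  · rw [show -(2 * m + 1) = 2 * (-1 - m) + 1 by ring, residueLine_two_mul_add_one,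
      residueLine_two_mul_add_one]
    simp [residueGraphReflection_inr]

theorem lineEdge_residueLine_two_mul (m : ℤ) :
    lineEdge (residueLine r s t) (2 * m) = s(.inl (m : ZMod (r * s)), .inr (m : ZMod (r * t))) := by
  rw [lineEdge, residueLine_two_mul, residueLine_two_mul_add_one]

theorem lineEdge_residueLine_two_mul_add_one (m : ℤ) :
    lineEdge (residueLine r s t) (2 * m + 1) =
      s(.inl ((m + 1 : ℤ) : ZMod (r * s)), .inr (m : ZMod (r * t))) := by
  rw [lineEdge, residueLine_two_mul_add_one, residueLine_two_mul_add_two, Sym2.eq_swap]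

theorem periodic_residueLine (r s t : ℕ) :
    Function.Periodic (residueLine r s t) (2 * (r * s * t) : ℕ) := by
  intro n
  obtain ⟨m, rfl | rfl⟩ := n.even_or_odd'
  · rw [show 2 * m + (2 * (r * s * t) : ℕ) = 2 * (m + (r * s : ℕ) * t) by push_cast; ring,
      residueLine_two_mul, residueLine_two_mul]
    simp only [Int.cast_add, Int.cast_mul, Int.cast_natCast, CharP.cast_eq_zero, zero_mul, add_zero]
  · rw [show 2 * m + 1 + (2 * (r * s * t) : ℕ) = 2 * (m + (r * t : ℕ) * s) + 1 by push_cast; ring,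
      residueLine_two_mul_add_one, residueLine_two_mul_add_one]
    simp only [Int.cast_add, Int.cast_mul, Int.cast_natCast, CharP.cast_eq_zero, zero_mul, add_zero]

theorem residueGraph_adj_residueLine (n : ℤ) :
    (residueGraph r s t).Adj (residueLine r s t n) (residueLine r s t (n + 1)) := by
  obtain ⟨m, rfl | rfl⟩ := n.even_or_odd'
  · simp [residueLine_two_mul, residueLine_two_mul_add_one, residueGraph, CycleRel,
      -ZMod.castHom_apply]
  · simp [residueLine_two_mul_add_one, residueLine_two_mul_add_two, residueGraph, CycleRel,
      -ZMod.castHom_apply]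

theorem not_intCast_eq_add_one_and_intCast_eq (hr : 2 ≤ r) (m n : ℤ) :
    ¬ ((m : ZMod (r * s)) = (n + 1 : ℤ) ∧ (m : ZMod (r * t)) = n) := by
  rintro ⟨h₁, h₂⟩
  have : Fact (1 < r) := ⟨hr⟩
  have h₁' := congrArg (residue r s) h₁
  have h₂' := congrArg (residue r t) h₂
  rw [map_intCast, map_intCast] at h₁' h₂'
  rw [h₂', Int.cast_add, Int.cast_one] at h₁'
  simp at h₁'

theorem dvd_sub_of_lineEdge_residueLine_eq (hr : 2 ≤ r) (hst : s.Coprime t) {m n : ℤ}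
    (h : lineEdge (residueLine r s t) m = lineEdge (residueLine r s t) n) :
    ((2 * (r * s * t) : ℕ) : ℤ) ∣ n - m := by
  have hsame {a b : ℤ} (hs : (a : ZMod (r * s)) = b) (ht : (a : ZMod (r * t)) = b) :
      ((2 * (r * s * t) : ℕ) : ℤ) ∣ 2 * (b - a) := by
    rw [Nat.cast_mul, ← lcm_mul_mul_of_coprime r hst]
    exact mul_dvd_mul_left _ (intCast_eq_and_intCast_eq_iff.1 ⟨hs, ht⟩)
  obtain ⟨a, rfl | rfl⟩ := m.even_or_odd' <;> obtain ⟨b, rfl | rfl⟩ := n.even_or_odd' <;>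
    simp only [lineEdge_residueLine_two_mul, lineEdge_residueLine_two_mul_add_one, Sym2.eq_iff,
      Sum.inl.injEq, Sum.inr.injEq, reduceCtorEq, and_self, or_false] at h
  · rw [← mul_sub]
    exact hsame h.1 h.2
  · exact (not_intCast_eq_add_one_and_intCast_eq hr a b h).elim
  · exact (not_intCast_eq_add_one_and_intCast_eq hr b a ⟨h.1.symm, h.2.symm⟩).elim
  · rw [add_sub_add_right_eq_sub, ← mul_sub]
    exact hsame (by simpa using h.1) h.2

theorem exists_lineEdge_residueLine_eq (hst : s.Coprime t) :
    ∀ e ∈ (residueGraph r s t).edgeSet, ∃ n, lineEdge (residueLine r s t) n = e := by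
  refine relGraph.forall_mem_edgeSet fun x y hxy ↦ ?_
  obtain ⟨a, rfl⟩ := ZMod.intCast_surjective x
  obtain ⟨b, rfl⟩ := ZMod.intCast_surjective y
  have crt {m n : ℤ} (h : (m : ZMod r) = n) :
      ∃ k : ℤ, (k : ZMod (r * s)) = m ∧ (k : ZMod (r * t)) = n :=
    exists_intCast_eq_and_intCast_eq (by rwa [gcd_mul_mul_of_coprime r hst])
  rw [map_intCast, map_intCast] at hxy
  rcases hxy with h | h
  · obtain ⟨k, hka, hkb⟩ := crt h.symm
    exact ⟨2 * k, by rw [lineEdge_residueLine_two_mul, hka, hkb]⟩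
  · obtain ⟨k, hka, hkb⟩ := crt (m := a - 1) (by rw [h]; push_cast; rfl)
    exact ⟨2 * k + 1, by rw [lineEdge_residueLine_two_mul_add_one, Int.cast_add, hka, hkb]; simp⟩

theorem isEulerianLine_residueLine (hr : 2 ≤ r) (hst : s.Coprime t) :
    IsEulerianLine (residueGraph r s t) (residueLine r s t) (2 * (r * s * t)) where
  adj := residueGraph_adj_residueLine
  periodic := periodic_residueLine r s t
  dvd_of_lineEdge_eq := dvd_sub_of_lineEdge_residueLine_eq hr hst
  exists_lineEdge_eq := exists_lineEdge_residueLine_eq hst _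

end ResidueGraph

theorem stmt10 (r s t : ℕ) (hr : 2 ≤ r) (hs : 1 ≤ s) (ht : 1 ≤ t) (hst : 1 < s * t)
    (hgcd : Nat.gcd s t = 1) :
    (∃ (v : (ZMod r × ZMod s) ⊕ (ZMod r × ZMod t)) (p : (blowupCycle r s t).Walk v v),
      p.IsEulerian ∧
      (∃ σ : blowupCycle r s t ≃g blowupCycle r s t, ∀ i : Fin p.edges.length,
        Sym2.map ⇑σ (p.edges.get i) =
          p.edges.get ⟨((i : ℕ) + 2) % p.edges.length, Nat.mod_lt _ i.pos⟩) ∧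
      (∃ ρ : blowupCycle r s t ≃g blowupCycle r s t, ∀ i : Fin p.edges.length,
        Sym2.map ⇑ρ (p.edges.get i) =
          p.edges.get ⟨(p.edges.length - 1 - (i : ℕ)) % p.edges.length, Nat.mod_lt _ i.pos⟩)) ∧
    -- no Eulerian circuit admits a shift-by-one automorphism
    (∀ (w : (ZMod r × ZMod s) ⊕ (ZMod r × ZMod t)) (q : (blowupCycle r s t).Walk w w),
      q.IsEulerian →
      ¬ ∃ σ' : blowupCycle r s t ≃g blowupCycle r s t, ∀ i : Fin q.edges.length,
        Sym2.map ⇑σ' (q.edges.get i) =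
          q.edges.get ⟨((i : ℕ) + 1) % q.edges.length, Nat.mod_lt _ i.pos⟩) := by
  have hr₀ : r ≠ 0 := by omega
  have hs₀ : s ≠ 0 := by omega
  have ht₀ : t ≠ 0 := by omega
  constructor
  · obtain ⟨φ⟩ := nonempty_residueGraph_iso_blowupCycle hr₀ hs₀ ht₀
    have hline := (isEulerianLine_residueLine hr hgcd).comp_iso φ
    let σ := φ.symm.trans ((residueGraphTranslation r s t).trans φ)
    let ρ := φ.symm.trans ((residueGraphReflection r s t).trans φ)
    obtain ⟨p, hp, hσ, hρ⟩ := hline.exists_symmetric_isEulerian (σ := σ) (ρ := ρ) (k := 2)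
      (by positivity) (fun n ↦ by simp [σ, residueGraphTranslation_residueLine])
      (fun n ↦ by simp [ρ, residueGraphReflection_residueLine])
    exact ⟨_, p, hp, ⟨σ, hσ⟩, ρ, hρ⟩
  · rintro w q hq ⟨σ, hσ⟩
    have hadj : (blowupCycle r s t).Adj (.inl 0) (.inr 0) := by
      rw [blowupCycle_eq_relGraph]
      exact .inl rfl
    have hcirc := isCircuit_of_isEulerian hq ((blowupCycle r s t).mem_edgeSet.2 hadj)
    obtain ⟨u, hu⟩ := exists_adj_apply_of_shift_one hcirc hσ
    obtain rfl := eq_of_adj_apply_iso hr σ hu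
    rw [Nat.gcd_self] at hgcd
    exact hst.ne' (by rw [hgcd])
end

section
/- Let Γ be a finite connected simple graph that has an Eulerian circuit with edge list (e_0, …, e_{ℓ−1}), and let σ be an automorphism of Γ with σ(e_i) = e_{(i+2) mod ℓ} for all i. Then the cyclic group generated by σ has at most two orbits on the vertex set of Γ; and if it has exactly two vertex orbits V_1 and V_2, then every edge of Γ has one endpoint in V_1 and one endpoint in V_2. -/
/-!
Number the vertices `x₀, x₁, …` along the circuit, cyclically, so that the edges are
`eᵢ = s(xᵢ, xᵢ₊₁)`. Consecutive edges are distinct, so they share the single vertex `xᵢ₊₁`; a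
permutation shifting the edges by `k` therefore shifts the vertices by `k`. Hence the orbit of `xᵢ`
depends only on `i` modulo `k`, and any `k` consecutive vertices meet every orbit. For `k = 2` this
says that the two ends of any edge represent all orbits.
-/

open MulAction Subgroup

section Orbits

variable {H α : Type*} [Group H] [MulAction H α]

theorem mem_orbit_zpowers_iff {g : H} {a b : α} :
    b ∈ orbit (zpowers g) a ↔ ∃ k : ℤ, g ^ k • a = b := by
  simp only [mem_orbit_iff, Subtype.exists, mk_smul, exists_prop, exists_mem_zpowers]

theorem orbit_zpowers_smul (g : H) (a : α) : orbit (zpowers g) (g • a) = orbit (zpowers g) a :=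
  orbit_eq_iff.mpr (mem_orbit_zpowers_iff.mpr ⟨1, by rw [zpow_one]⟩)

variable {g : H} {x : ℕ → α} {k : ℕ}

theorem orbit_zpowers_add_mul_of_smul_eq_add (hx : ∀ n, g • x n = x (n + k)) (i m : ℕ) :
    orbit (zpowers g) (x (i + k * m)) = orbit (zpowers g) (x i) := by
  induction m with
  | zero => rfl
  | succ m ih => rw [Nat.mul_succ, ← Nat.add_assoc, ← hx, orbit_zpowers_smul, ih]

theorem orbit_zpowers_eq_of_modEq (hx : ∀ n, g • x n = x (n + k)) {i j : ℕ}
    (hij : i ≡ j [MOD k]) : orbit (zpowers g) (x i) = orbit (zpowers g) (x j) := by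
  wlog hle : i ≤ j generalizing i j
  · exact (this hij.symm (Nat.le_of_not_le hle)).symm
  obtain ⟨m, hm⟩ := (Nat.modEq_iff_dvd' hle).mp hij
  rw [← Nat.add_sub_of_le hle, hm, orbit_zpowers_add_mul_of_smul_eq_add hx]

theorem exists_lt_orbit_zpowers_eq_add (hx : ∀ n, g • x n = x (n + k)) (hk : 0 < k) (i n : ℕ) :
    ∃ j < k, orbit (zpowers g) (x n) = orbit (zpowers g) (x (i + j)) := by
  obtain ⟨j, hj, hmod⟩ : ∃ j < k, n ≡ i + j [MOD k] := by
    refine ⟨(n + (k - 1) * i) % k, Nat.mod_lt _ hk, ?_⟩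
    have hsum : i + (n + (k - 1) * i) = n + k * i := by
      rw [Nat.sub_one_mul]
      have := Nat.le_mul_of_pos_left i hk
      lia
    calc n ≡ n + k * i [MOD k] := by simp [Nat.ModEq]
      _ = i + (n + (k - 1) * i) := hsum.symm
      _ ≡ i + (n + (k - 1) * i) % k [MOD k] := (Nat.mod_modEq _ k).symm.add_left i
  exact ⟨j, hj, orbit_zpowers_eq_of_modEq hx hmod⟩

theorem exists_mem_orbit_eq_mk_of_orbit_ne {a b v₁ v₂ : α}
    (hab : ∀ w : α, orbit H w = orbit H a ∨ orbit H w = orbit H b)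
    (hne : orbit H v₁ ≠ orbit H v₂) :
    ∃ y₁ ∈ orbit H v₁, ∃ y₂ ∈ orbit H v₂, s(a, b) = s(y₁, y₂) := by
  simp only [← orbit_eq_iff]
  rcases hab v₁ with h₁ | h₁ <;> rcases hab v₂ with h₂ | h₂
  · exact absurd (h₁.trans h₂.symm) hne
  · exact ⟨a, h₁.symm, b, h₂.symm, rfl⟩
  · exact ⟨b, h₁.symm, a, h₂.symm, Sym2.eq_swap⟩
  · exact absurd (h₁.trans h₂.symm) hne

end Orbits

theorem eq_of_mk_eq_mk_of_ne {α : Type*} {a b c a' b' c' : α} (hac : a ≠ c)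
    (hab : s(a, b) = s(a', b')) (hbc : s(b, c) = s(b', c')) : b = b' := by
  rw [Sym2.eq_iff] at hab hbc
  grind

section ClosedWalks

variable {V : Type*} {G : SimpleGraph V} {u : V}

/-- The vertices `x₀, x₁, …` of a closed walk, numbered cyclically: indices are read modulo the
length of the walk, so that shifting them needs no side conditions. For the walk of length `0` the
sequence is constant. -/
def cyclicVert (p : G.Walk u u) (i : ℕ) : V :=
  p.getVert (i % p.length)

theorem cyclicVert_add_length (p : G.Walk u u) (i : ℕ) :
    cyclicVert p (i + p.length) = cyclicVert p i := by
  rw [cyclicVert, cyclicVert, Nat.add_mod_right]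

theorem cyclicVert_of_le_length {p : G.Walk u u} {i : ℕ} (hi : i ≤ p.length) :
    cyclicVert p i = p.getVert i := by
  rcases hi.eq_or_lt with rfl | hi
  · rw [cyclicVert, Nat.mod_self, p.getVert_zero, p.getVert_length]
  · rw [cyclicVert, Nat.mod_eq_of_lt hi]

theorem getElem_edges_eq_mk_cyclicVert {p : G.Walk u u} {i : ℕ} (hi : i < p.edges.length) :
    p.edges[i] = s(cyclicVert p i, cyclicVert p (i + 1)) := by
  have hi' : i < p.length := p.length_edges ▸ hi
  rw [SimpleGraph.Walk.getElem_edges, cyclicVert_of_le_length hi'.le, cyclicVert_of_le_length hi']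

theorem getElem_edges_mod_length {p : G.Walk u u} {i : ℕ}
    (hi : i % p.edges.length < p.edges.length) :
    p.edges[i % p.edges.length] = s(cyclicVert p i, cyclicVert p (i + 1)) := by
  simp only [getElem_edges_eq_mk_cyclicVert, p.length_edges, cyclicVert, Nat.mod_mod,
    Nat.mod_add_mod]

theorem exists_cyclicVert_eq_of_mem_support {p : G.Walk u u} {w : V} (hw : w ∈ p.support) :
    ∃ i, cyclicVert p i = w := by
  obtain ⟨i, rfl, hi⟩ := SimpleGraph.Walk.mem_support_iff_exists_getVert.mp hw
  exact ⟨i, cyclicVert_of_le_length hi⟩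

theorem exists_mk_cyclicVert_eq_of_mem_edges {p : G.Walk u u} {e : Sym2 V} (he : e ∈ p.edges) :
    ∃ i, s(cyclicVert p i, cyclicVert p (i + 1)) = e := by
  obtain ⟨i, hi, rfl⟩ := List.getElem_of_mem he
  exact ⟨i, (getElem_edges_eq_mk_cyclicVert hi).symm⟩

variable {p : G.Walk u u}

theorem length_edges_pos_of_isCircuit (hp : p.IsCircuit) : 0 < p.edges.length := by
  rw [p.length_edges]
  exact SimpleGraph.Walk.not_nil_iff_lt_length.mp hp.not_nil

theorem adj_cyclicVert_succ (hp : p.IsCircuit) (i : ℕ) :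
    G.Adj (cyclicVert p i) (cyclicVert p (i + 1)) := by
  have hi := Nat.mod_lt i (length_edges_pos_of_isCircuit hp)
  rw [← SimpleGraph.mem_edgeSet, ← getElem_edges_mod_length hi]
  exact p.edges_subset_edgeSet (List.getElem_mem hi)

theorem cyclicVert_ne_cyclicVert_add_two (hp : p.IsCircuit) (i : ℕ) :
    cyclicVert p i ≠ cyclicVert p (i + 2) := by
  intro heq
  have hpos := length_edges_pos_of_isCircuit hp
  have hedge : p.edges[i % p.edges.length]'(Nat.mod_lt _ hpos) =
      p.edges[(i + 1) % p.edges.length]'(Nat.mod_lt _ hpos) := by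
    rw [getElem_edges_mod_length, getElem_edges_mod_length, heq, Sym2.eq_swap]
  have hmod := (List.Nodup.getElem_inj_iff hp.edges_nodup).mp hedge
  rw [p.length_edges] at hmod
  refine (adj_cyclicVert_succ hp i).ne ?_
  rw [cyclicVert, cyclicVert, hmod]

theorem map_cyclicVert_of_map_edges (hp : p.IsCircuit) {f : V → V} (hf : f.Injective) {k : ℕ}
    (hshift : ∀ i : Fin p.edges.length, Sym2.map f (p.edges.get i) =
      p.edges.get ⟨((i : ℕ) + k) % p.edges.length, Nat.mod_lt _ i.pos⟩) (i : ℕ) :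
    f (cyclicVert p i) = cyclicVert p (i + k) := by
  have hpos := length_edges_pos_of_isCircuit hp
  have hedge (j : ℕ) : s(f (cyclicVert p j), f (cyclicVert p (j + 1))) =
      s(cyclicVert p (j + k), cyclicVert p (j + 1 + k)) := by
    have h := hshift ⟨j % p.edges.length, Nat.mod_lt _ hpos⟩
    simp only [List.get_eq_getElem, Nat.mod_add_mod, getElem_edges_mod_length, Sym2.map_mk] at h
    rw [h, Nat.add_right_comm]
  have hsucc (j : ℕ) : f (cyclicVert p (j + 1)) = cyclicVert p (j + 1 + k) :=
    eq_of_mk_eq_mk_of_ne (hf.ne (cyclicVert_ne_cyclicVert_add_two hp j)) (hedge j) (hedge (j + 1))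
  have hlast : i + p.length = i + p.length - 1 + 1 := by
    rw [p.length_edges] at hpos
    lia
  calc f (cyclicVert p i) = f (cyclicVert p (i + p.length)) := by rw [cyclicVert_add_length]
    _ = cyclicVert p (i + p.length + k) := by rw [hlast, hsucc]
    _ = cyclicVert p (i + k) := by rw [Nat.add_right_comm, cyclicVert_add_length]

theorem orbit_zpowers_eq_or_eq_of_mem_edges {H : Type*} [Group H] [MulAction H V] {g : H}
    (hp : p.IsCircuit)
    (hshift : ∀ i : Fin p.edges.length, Sym2.map (g • ·) (p.edges.get i) =
      p.edges.get ⟨((i : ℕ) + 2) % p.edges.length, Nat.mod_lt _ i.pos⟩)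
    {a b w : V} (hab : s(a, b) ∈ p.edges) (hw : w ∈ p.support) :
    orbit (zpowers g) w = orbit (zpowers g) a ∨ orbit (zpowers g) w = orbit (zpowers g) b := by
  obtain ⟨i, hi⟩ := exists_mk_cyclicVert_eq_of_mem_edges hab
  obtain ⟨n, rfl⟩ := exists_cyclicVert_eq_of_mem_support hw
  obtain ⟨j, hj, horbit⟩ := exists_lt_orbit_zpowers_eq_add
    (map_cyclicVert_of_map_edges hp (MulAction.injective g) hshift) two_pos i n
  rcases Sym2.eq_iff.mp hi with ⟨rfl, rfl⟩ | ⟨rfl, rfl⟩ <;> interval_cases j <;> simp [horbit]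

end ClosedWalks

section Eulerian

variable {V : Type*} [DecidableEq V] {G : SimpleGraph V} {u v : V}

theorem mem_support_of_isEulerian {p : G.Walk u v} (hp : p.IsEulerian) (hG : G.Preconnected)
    (w : V) : w ∈ p.support := by
  rcases subsingleton_or_nontrivial V with _ | _
  · exact Subsingleton.elim u w ▸ p.start_mem_support
  · obtain ⟨w', hadj⟩ := hG.exists_adj_of_nontrivial w
    exact p.fst_mem_support_of_mem_edges (hp.mem_edges_iff.mpr hadj)

theorem isCircuit_of_isEulerian_of_adj {p : G.Walk u u} (hp : p.IsEulerian) {a b : V}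
    (hab : G.Adj a b) : p.IsCircuit := by
  refine ⟨hp.isTrail, ?_⟩
  rintro rfl
  simpa using hp.mem_edges_iff.mpr (G.mem_edgeSet.mpr hab)

end Eulerian

theorem stmt11 {V : Type} [Fintype V] [DecidableEq V] (Γ : SimpleGraph V)
    (hconn : Γ.Connected)
    (v : V) (p : Γ.Walk v v) (hp : p.IsEulerian)
    (σ : Γ ≃g Γ)
    (hσ : ∀ i : Fin p.edges.length,
      Sym2.map ⇑σ (p.edges.get i) =
        p.edges.get ⟨((i : ℕ) + 2) % p.edges.length, Nat.mod_lt _ i.pos⟩) :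
    -- at most two orbits on the vertex set
    (∃ v₁ v₂ : V, ∀ w : V, (∃ k : ℤ, (σ ^ k) v₁ = w) ∨ (∃ k : ℤ, (σ ^ k) v₂ = w)) ∧
    -- if there are exactly two vertex orbits, every edge joins them
    (∀ V₁ V₂ : Set V,
      (∃ v₁ : V, V₁ = {w : V | ∃ k : ℤ, (σ ^ k) v₁ = w}) →
      (∃ v₂ : V, V₂ = {w : V | ∃ k : ℤ, (σ ^ k) v₂ = w}) →
      V₁ ≠ V₂ → (∀ w : V, w ∈ V₁ ∪ V₂) →
      ∀ e ∈ Γ.edgeSet, ∃ x ∈ V₁, ∃ y ∈ V₂, e = s(x, y)) := by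
  have hsetOf (a : V) : {w | ∃ k : ℤ, (σ ^ k) a = w} = orbit (zpowers σ) a :=
    Set.ext fun _ => (mem_orbit_zpowers_iff (g := σ)).symm
  have hadj {a b : V} (hab : Γ.Adj a b) (w : V) :
      orbit (zpowers σ) w = orbit (zpowers σ) a ∨ orbit (zpowers σ) w = orbit (zpowers σ) b :=
    orbit_zpowers_eq_or_eq_of_mem_edges (isCircuit_of_isEulerian_of_adj hp hab) hσ
      (hp.mem_edges_iff.mpr hab) (mem_support_of_isEulerian hp hconn.preconnected w)
  constructor
  · rcases subsingleton_or_nontrivial V with _ | _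
    · exact ⟨v, v, fun w => Or.inl ⟨0, Subsingleton.elim _ w⟩⟩
    · obtain ⟨w, hvw⟩ := hconn.preconnected.exists_adj_of_nontrivial v
      refine ⟨v, w, fun y => (hadj hvw y).imp ?_ ?_⟩ <;>
        exact fun h => mem_orbit_zpowers_iff.mp (orbit_eq_iff.mp h)
  · rintro _ _ ⟨v₁, rfl⟩ ⟨v₂, rfl⟩ hne _ ⟨a, b⟩ hab
    rw [hsetOf, hsetOf] at hne ⊢
    exact exists_mem_orbit_eq_mk_of_orbit_ne (hadj hab) hne
end
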